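/- arXiv:1803.08522 — 6 statements merged into one kernel-verified Lean document; each statement's English description precedes it below -/
import Mathlib

section
/- Let K ⊆ ℝⁿ be a closed set, let x ∈ Kᶜ and let φ ∈ ℝⁿ be a unit vector. If r₁, r₂ > 0 satisfy x + r₁φ ∈ Kᶜ, x + r₂φ ∈ Kᶜ and l^φ_x(r₁) = l^φ_x(r₂), then r₁ = r₂. -/
open MeasureTheory

/-- `ell K x φ r = ∫₀^r 1_{Kᶜ}(x + tφ) dt`, the length of the segment from `x` to
`x + rφ` lying outside `K`. -/
noncomputable def ell {n : ℕ} (K : Set (EuclideanSpace ℝ (Fin n)))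
    (x φ : EuclideanSpace ℝ (Fin n)) (r : ℝ) : ℝ :=
  ∫ t in (0:ℝ)..r, Set.indicator Kᶜ (fun _ => (1:ℝ)) (x + t • φ)

/-!
Since `Kᶜ` is open, so is the set `U` of those `t` with `x + t • φ ∉ K`. For `s < r` the integral
of the indicator of `U` over `(s, r]` is the measure of `U ∩ (s, r]`, and when `r ∈ U` this set
contains an interval `(r - ε, r]`, so its measure is positive.
-/

open scoped Topology

lemma measure_inter_Ioc_pos {α : Type*} [LinearOrder α] [DenselyOrdered α] [TopologicalSpace α]
    [OrderTopology α] [MeasurableSpace α] {μ : Measure α} [μ.IsOpenPosMeasure] {U : Set α}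
    {s r : α} (hsr : s < r) (hU : IsOpen U) (hr : r ∈ U) : 0 < μ (U ∩ Set.Ioc s r) := by
  have : (𝓝[<] r).NeBot := nhdsLT_neBot_of_exists_lt ⟨s, hsr⟩
  have hnonempty : (U ∩ Set.Ioo s r).Nonempty :=
    Filter.nonempty_of_mem (f := 𝓝[<] r)
      (Filter.inter_mem (mem_nhdsWithin_of_mem_nhds (hU.mem_nhds hr)) (Ioo_mem_nhdsLT hsr))
  calc
    0 < μ (U ∩ Set.Ioo s r) := (hU.inter isOpen_Ioo).measure_pos μ hnonempty
    _ ≤ μ (U ∩ Set.Ioc s r) := by gcongr; exact Set.Ioo_subset_Ioc_self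

section IntervalIntegral

variable {μ : Measure ℝ} {U : Set ℝ}

lemma intervalIntegral_indicator_one {s r : ℝ} (hsr : s ≤ r) (hU : MeasurableSet U) :
    ∫ t in s..r, U.indicator 1 t ∂μ = μ.real (U ∩ Set.Ioc s r) := by
  rw [intervalIntegral.integral_of_le hsr, integral_indicator_one hU,
    measureReal_restrict_apply hU]

variable [IsLocallyFiniteMeasure μ]

lemma intervalIntegrable_indicator_one (hU : MeasurableSet U) (s r : ℝ) :
    IntervalIntegrable (U.indicator (1 : ℝ → ℝ)) μ s r :=
  have hone : IntervalIntegrable (1 : ℝ → ℝ) μ s r := intervalIntegrable_const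
  ⟨hone.1.indicator hU, hone.2.indicator hU⟩

lemma strictMonoOn_intervalIntegral_indicator_one [μ.IsOpenPosMeasure] (hU : IsOpen U) (a : ℝ) :
    StrictMonoOn (fun r ↦ ∫ t in a..r, U.indicator (1 : ℝ → ℝ) t ∂μ) U := by
  intro s _ r hr hsr
  have hint := intervalIntegrable_indicator_one (μ := μ) hU.measurableSet a
  have hfinite : μ (U ∩ Set.Ioc s r) ≠ ⊤ :=
    measure_ne_top_of_subset Set.inter_subset_right measure_Ioc_lt_top.ne
  rw [← sub_pos]
  calc
    0 < μ.real (U ∩ Set.Ioc s r) :=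
      ENNReal.toReal_pos (measure_inter_Ioc_pos hsr hU hr).ne' hfinite
    _ = ∫ t in s..r, U.indicator 1 t ∂μ :=
      (intervalIntegral_indicator_one hsr.le hU.measurableSet).symm
    _ = (∫ t in a..r, U.indicator 1 t ∂μ) - ∫ t in a..s, U.indicator 1 t ∂μ :=
      (intervalIntegral.integral_interval_sub_left (hint r) (hint s)).symm

end IntervalIntegral

theorem ell_injective_general {X : Type*} [TopologicalSpace X] {K : Set X} (hK : IsClosed K)
    {γ : ℝ → X} (hγ : Continuous γ) (μ : Measure ℝ) [IsLocallyFiniteMeasure μ]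
    [μ.IsOpenPosMeasure] (a : ℝ) :
    Set.InjOn (fun r ↦ ∫ t in a..r, Kᶜ.indicator (fun _ ↦ (1 : ℝ)) (γ t) ∂μ) (γ ⁻¹' Kᶜ) :=
  (strictMonoOn_intervalIntegral_indicator_one (hK.isOpen_compl.preimage hγ) a).injOn

theorem ell_injective {n : ℕ} (K : Set (EuclideanSpace ℝ (Fin n))) (hK : IsClosed K)
    (x φ : EuclideanSpace ℝ (Fin n)) (hx : x ∈ Kᶜ) (hφ : ‖φ‖ = 1)
    (r₁ r₂ : ℝ) (hr₁ : 0 < r₁) (hr₂ : 0 < r₂)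
    (h₁ : x + r₁ • φ ∈ Kᶜ) (h₂ : x + r₂ • φ ∈ Kᶜ)
    (h : ell K x φ r₁ = ell K x φ r₂) :
    r₁ = r₂ :=
  ell_injective_general hK (γ := fun t ↦ x + t • φ) (by fun_prop) volume 0 h₁ h₂ h
end

section
/- If K ⊆ ℝⁿ is a closed set and x ∈ Kᶜ, then the restriction of the map T^K_x to Kᶜ is injective. -/
open MeasureTheory

-- The map `T^K_x`, sending `x + rφ` (with `r > 0`, `‖φ‖ = 1`) to `x + l^φ_x(r)·φ`,
-- and fixing `x`.
open Classical in
noncomputable def Tmap {n : ℕ} (K : Set (EuclideanSpace ℝ (Fin n)))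
    (x y : EuclideanSpace ℝ (Fin n)) : EuclideanSpace ℝ (Fin n) :=
  if y = x then x
  else x + (ell K x (‖y - x‖⁻¹ • (y - x)) ‖y - x‖) • (‖y - x‖⁻¹ • (y - x))

/-!
Travelling along a ray from `x`, the length spent outside `K` never decreases, and it increases
strictly on every interval that ends at a point of the open set `Kᶜ`, because such an interval
contains a nondegenerate one on which the ray avoids `K`. Hence `T^K_x` preserves the direction of
`y - x` for `y ∈ Kᶜ`, and along each ray it is strictly monotone on `Kᶜ`.
-/

theorem measure_inter_Ioc_pos_of_isOpen {α : Type*} [TopologicalSpace α] [LinearOrder α]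
    [OrderTopology α] [DenselyOrdered α] [MeasurableSpace α] (μ : Measure α)
    [μ.IsOpenPosMeasure] {U : Set α} (hU : IsOpen U) {a b : α} (hab : a < b) (hb : b ∈ U) :
    0 < μ (U ∩ Set.Ioc a b) := by
  have hb_closure : b ∈ closure (Set.Ioo a b) := by
    rw [closure_Ioo hab.ne]
    exact Set.right_mem_Icc.2 hab.le
  have hne : (U ∩ Set.Ioo a b).Nonempty := mem_closure_iff.1 hb_closure U hU hb
  calc
    0 < μ (U ∩ Set.Ioo a b) := (hU.inter isOpen_Ioo).measure_pos μ hne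
    _ ≤ μ (U ∩ Set.Ioc a b) :=
      measure_mono (Set.inter_subset_inter_right U Set.Ioo_subset_Ioc_self)

section

open NormedSpace

theorem add_norm_smul_normalize_sub {E : Type*} [NormedAddCommGroup E] [NormedSpace ℝ E]
    (x y : E) : x + ‖y - x‖ • normalize (y - x) = y := by
  rw [norm_smul_normalize, add_sub_cancel]

variable {n : ℕ} {K : Set (EuclideanSpace ℝ (Fin n))} {x y φ : EuclideanSpace ℝ (Fin n)} {a b : ℝ}

theorem ell_zero : ell K x φ 0 = 0 :=
  intervalIntegral.integral_same

theorem ell_nonneg (ha : 0 ≤ a) : 0 ≤ ell K x φ a :=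
  intervalIntegral.integral_nonneg ha fun _ _ ↦ Set.indicator_nonneg (fun _ _ ↦ zero_le_one) _

theorem ell_sub_ell (hK : MeasurableSet K) (hab : a ≤ b) :
    ell K x φ b - ell K x φ a =
      volume.real ((fun t : ℝ ↦ x + t • φ) ⁻¹' Kᶜ ∩ Set.Ioc a b) := by
  set U : Set ℝ := (fun t ↦ x + t • φ) ⁻¹' Kᶜ
  have hU : MeasurableSet U := hK.compl.preimage (by fun_prop)
  have hintegrable (c d : ℝ) : IntervalIntegrable (U.indicator 1) volume c d :=
    intervalIntegrable_iff.2 ((intervalIntegrable_iff.1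
      (intervalIntegrable_const (c := (1 : ℝ)))).indicator hU)
  calc
    ell K x φ b - ell K x φ a = ∫ t in a..b, U.indicator (1 : ℝ → ℝ) t :=
      intervalIntegral.integral_interval_sub_left (hintegrable 0 b) (hintegrable 0 a)
    _ = ∫ t in Set.Ioc a b, U.indicator (1 : ℝ → ℝ) t := intervalIntegral.integral_of_le hab
    _ = volume.real (U ∩ Set.Ioc a b) := by
      rw [integral_indicator_one hU, measureReal_restrict_apply hU]

theorem ell_lt_ell (hK : IsClosed K) (hab : a < b) (hb : x + b • φ ∈ Kᶜ) :
    ell K x φ a < ell K x φ b := by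
  have hU : IsOpen ((fun t : ℝ ↦ x + t • φ) ⁻¹' Kᶜ) := hK.isOpen_compl.preimage (by fun_prop)
  rw [← sub_pos, ell_sub_ell hK.measurableSet hab.le]
  exact ENNReal.toReal_pos (measure_inter_Ioc_pos_of_isOpen volume hU hab hb).ne'
    (measure_ne_top_of_subset Set.inter_subset_right measure_Ioc_lt_top.ne)

theorem ell_strictMonoOn (hK : IsClosed K) :
    StrictMonoOn (ell K x φ) ((fun r : ℝ ↦ x + r • φ) ⁻¹' Kᶜ) :=
  fun _ _ _ hb hab ↦ ell_lt_ell hK hab hb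

theorem ell_normalize_sub_pos (hK : IsClosed K) (hy : y ∈ Kᶜ) (hyx : y ≠ x) :
    0 < ell K x (normalize (y - x)) ‖y - x‖ := by
  rw [← ell_zero (K := K) (x := x) (φ := normalize (y - x))]
  refine ell_lt_ell hK (norm_sub_pos_iff.2 hyx) ?_
  rwa [add_norm_smul_normalize_sub]

theorem Tmap_sub_self :
    Tmap K x y - x = ell K x (normalize (y - x)) ‖y - x‖ • normalize (y - x) := by
  obtain rfl | hyx := eq_or_ne y x
  · simp [Tmap]
  · simp only [Tmap, if_neg hyx, add_sub_cancel_left, NormedSpace.normalize]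

theorem norm_Tmap_sub_self : ‖Tmap K x y - x‖ = ell K x (normalize (y - x)) ‖y - x‖ := by
  obtain rfl | hyx := eq_or_ne y x
  · simp [Tmap, ell_zero]
  · rw [Tmap_sub_self, norm_smul, norm_normalize (sub_ne_zero.2 hyx), mul_one,
      Real.norm_of_nonneg (ell_nonneg (norm_nonneg _))]

theorem normalize_Tmap_sub_self (hK : IsClosed K) (hy : y ∈ Kᶜ) :
    normalize (Tmap K x y - x) = normalize (y - x) := by
  obtain rfl | hyx := eq_or_ne y x
  · simp [Tmap]
  · rw [Tmap_sub_self, normalize_smul_of_pos (ell_normalize_sub_pos hK hy hyx),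
      normalize_normalize]

theorem Tmap_injOn_general {n : ℕ} (K : Set (EuclideanSpace ℝ (Fin n))) (hK : IsClosed K)
    (x : EuclideanSpace ℝ (Fin n)) :
    Set.InjOn (Tmap K x) Kᶜ := by
  intro y hy z hz hyz
  have hdir : normalize (y - x) = normalize (z - x) := by
    rw [← normalize_Tmap_sub_self hK hy, hyz, normalize_Tmap_sub_self hK hz]
  have hlength : ell K x (normalize (z - x)) ‖y - x‖ = ell K x (normalize (z - x)) ‖z - x‖ := by
    rw [← norm_Tmap_sub_self, ← hyz, norm_Tmap_sub_self, hdir]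
  have hnorm : ‖y - x‖ = ‖z - x‖ := by
    refine (ell_strictMonoOn hK).injOn ?_ ?_ hlength
    · rwa [Set.mem_preimage, ← hdir, add_norm_smul_normalize_sub]
    · rwa [Set.mem_preimage, add_norm_smul_normalize_sub]
  rw [← add_norm_smul_normalize_sub x y, hdir, hnorm, add_norm_smul_normalize_sub]

end

theorem Tmap_injOn {n : ℕ} (K : Set (EuclideanSpace ℝ (Fin n))) (hK : IsClosed K)
    (x : EuclideanSpace ℝ (Fin n)) (hx : x ∈ Kᶜ) :
    Set.InjOn (Tmap K x) Kᶜ :=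
  Tmap_injOn_general K hK x
end

section
/- Let K ⊆ ℝⁿ be a closed set and let q : ℝⁿ → [0, ∞) be a symmetric function, i.e. q(z) = q(−z) for all z ∈ ℝⁿ. Then the ghost density is symmetric on Kᶜ: for all x, y ∈ Kᶜ, q_K(x, y) = q_K(y, x). -/
open MeasureTheory

-- The ghost density `q_K(x, x + rφ) = q(l^φ_x(r)·φ)·(l^φ_x(r)/r)^(n-1)·1_{Kᶜ}(x + rφ)`
-- for `r > 0` and unit vectors `φ`, with `q_K(x, x) = q 0`.
open Classical in
noncomputable def ghost {n : ℕ} (K : Set (EuclideanSpace ℝ (Fin n)))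
    (q : EuclideanSpace ℝ (Fin n) → ℝ)
    (x y : EuclideanSpace ℝ (Fin n)) : ℝ :=
  if y = x then q 0
  else
    q ((ell K x (‖y - x‖⁻¹ • (y - x)) ‖y - x‖) • (‖y - x‖⁻¹ • (y - x)))
      * (ell K x (‖y - x‖⁻¹ • (y - x)) ‖y - x‖ / ‖y - x‖) ^ (n - 1)
      * Set.indicator Kᶜ (fun _ => (1:ℝ)) y

/-!
Substituting `t = ‖y - x‖ s` in the integral defining `ell`, the length of the part of the segment
from `x` to `y` outside `K` is `m * ‖y - x‖`, where `m` is the proportion of the segment outside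
`K`. Hence `ghost K q x y = q (m • (y - x)) * m ^ (n - 1)` for `y ∉ K`. The reflection `s ↦ 1 - s`
shows that `m` does not depend on the orientation of the segment, so exchanging `x` and `y` only
changes the sign of the argument of `q`.
-/

/-- The proportion of the segment from `x` to `y` lying in `S`, measured in the affine
parametrisation by `[0, 1]`. For `y = x` it is `1` or `0` according to whether `x ∈ S`. -/
noncomputable def segmentFraction {E : Type*} [AddCommGroup E] [Module ℝ E]
    (S : Set E) (x y : E) : ℝ :=
  volume.real {t : unitInterval | AffineMap.lineMap x y (t : ℝ) ∈ S}

section SegmentFraction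

variable {E : Type*} [AddCommGroup E] [Module ℝ E]

theorem segmentFraction_comm (S : Set E) (x y : E) :
    segmentFraction S x y = segmentFraction S y x := by
  have reflect : {t : unitInterval | AffineMap.lineMap x y (t : ℝ) ∈ S} =
      unitInterval.symm ⁻¹' {t | AffineMap.lineMap y x (t : ℝ) ∈ S} := by
    ext t
    simp only [Set.mem_ofPred_eq, Set.mem_preimage, unitInterval.coe_symm_eq,
      AffineMap.lineMap_apply_one_sub]
  rw [segmentFraction, segmentFraction, reflect, measureReal_def, measureReal_def,
    unitInterval.measurePreserving_symm.measure_preimage_emb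
      unitInterval.symmMeasurableEquiv.measurableEmbedding]

theorem segmentFraction_self_of_mem {S : Set E} {x : E} (hx : x ∈ S) :
    segmentFraction S x x = 1 := by
  simp only [segmentFraction, AffineMap.lineMap_same_apply, hx, Set.ofPred_true, probReal_univ]

theorem segmentFraction_eq_integral [TopologicalSpace E] [IsTopologicalAddGroup E]
    [ContinuousSMul ℝ E] [MeasurableSpace E] [BorelSpace E] {S : Set E} (hS : MeasurableSet S)
    (x y : E) :
    segmentFraction S x y =
      ∫ t in (0 : ℝ)..1, S.indicator (fun _ => 1) (AffineMap.lineMap x y t) := by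
  have measurable_lineMap : Measurable fun t : unitInterval => AffineMap.lineMap x y (t : ℝ) :=
    (AffineMap.lineMap_continuous.comp continuous_subtype_val).measurable
  calc segmentFraction S x y
      = ∫ t : unitInterval, S.indicator (fun _ => (1 : ℝ)) (AffineMap.lineMap x y (t : ℝ)) :=
        (integral_indicator_one (measurable_lineMap hS)).symm
    _ = ∫ t in Set.Icc (0 : ℝ) 1, S.indicator (fun _ => (1 : ℝ)) (AffineMap.lineMap x y t) :=
        unitInterval.measurePreserving_coe.integral_comp unitInterval.measurableEmbedding_coe
          fun t => S.indicator (fun _ => (1 : ℝ)) (AffineMap.lineMap x y t)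
    _ = ∫ t in (0 : ℝ)..1, S.indicator (fun _ => (1 : ℝ)) (AffineMap.lineMap x y t) := by
        rw [integral_Icc_eq_integral_Ioc, intervalIntegral.integral_of_le zero_le_one]

end SegmentFraction

section Ghost

variable {n : ℕ} {K : Set (EuclideanSpace ℝ (Fin n))}

theorem ell_eq_mul_segmentFraction (hK : MeasurableSet K) (x φ : EuclideanSpace ℝ (Fin n))
    (r : ℝ) : ell K x φ r = r * segmentFraction Kᶜ x (x + r • φ) := by
  have lineMap_eq (s : ℝ) : AffineMap.lineMap x (x + r • φ) s = x + (r * s) • φ := by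
    rw [AffineMap.lineMap_apply_module', add_sub_cancel_left, smul_smul, mul_comm s, add_comm]
  have rescale := intervalIntegral.smul_integral_comp_mul_left (a := 0) (b := 1)
    (fun t => Kᶜ.indicator (fun _ => (1 : ℝ)) (x + t • φ)) r
  simp only [segmentFraction_eq_integral hK.compl, lineMap_eq]
  rw [← smul_eq_mul, rescale, mul_zero, mul_one, ell]

theorem ghost_eq_of_notMem (hK : MeasurableSet K) (q : EuclideanSpace ℝ (Fin n) → ℝ)
    (x : EuclideanSpace ℝ (Fin n)) {y : EuclideanSpace ℝ (Fin n)} (hy : y ∉ K) :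
    ghost K q x y =
      q (segmentFraction Kᶜ x y • (y - x)) * segmentFraction Kᶜ x y ^ (n - 1) := by
  rcases eq_or_ne y x with rfl | hne
  · rw [ghost, if_pos rfl, segmentFraction_self_of_mem hy, sub_self, smul_zero, one_pow, mul_one]
  · have norm_ne_zero : ‖y - x‖ ≠ 0 := norm_ne_zero_iff.mpr (sub_ne_zero.mpr hne)
    have ell_eq : ell K x (‖y - x‖⁻¹ • (y - x)) ‖y - x‖ = ‖y - x‖ * segmentFraction Kᶜ x y := by
      rw [ell_eq_mul_segmentFraction hK, smul_inv_smul₀ norm_ne_zero, add_sub_cancel]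
    rw [ghost, if_neg hne, ell_eq, mul_div_cancel_left₀ _ norm_ne_zero, mul_comm ‖y - x‖,
      mul_smul, smul_inv_smul₀ norm_ne_zero, Set.indicator_of_mem (Set.mem_compl hy), mul_one]

theorem ghost_symm_general (hK : MeasurableSet K) {q : EuclideanSpace ℝ (Fin n) → ℝ}
    (hq : q.Even) {x y : EuclideanSpace ℝ (Fin n)} (hx : x ∉ K) (hy : y ∉ K) :
    ghost K q x y = ghost K q y x := by
  rw [ghost_eq_of_notMem hK q x hy, ghost_eq_of_notMem hK q y hx, segmentFraction_comm Kᶜ y x,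
    ← neg_sub y x, smul_neg, hq]

end Ghost

theorem ghost_symm {n : ℕ} (K : Set (EuclideanSpace ℝ (Fin n))) (hK : IsClosed K)
    (q : EuclideanSpace ℝ (Fin n) → ℝ) (hq0 : ∀ z, 0 ≤ q z)
    (hqsymm : ∀ z, q z = q (-z))
    (x y : EuclideanSpace ℝ (Fin n)) (hx : x ∈ Kᶜ) (hy : y ∈ Kᶜ) :
    ghost K q x y = ghost K q y x :=
  ghost_symm_general hK.measurableSet (fun z => (hqsymm z).symm) hx hy
end

section
/- Let K ⊆ ℝⁿ be a closed set, let x ∈ Kᶜ and let q : ℝⁿ → [0, ∞) be measurable. Then for every measurable set A ⊆ ℝⁿ, Q_K(x, A) = Q(x, T^K_x(A ∩ Kᶜ)), i.e. ∫_A q_K(x, y) dy = ∫_{T^K_x(A ∩ Kᶜ)} q(y − x) dy. -/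
open MeasureTheory

/-!
In polar coordinates around `x`, the map `T` acts on the ray of direction `φ` as `r ↦ l(r)`, and the
Lebesgue measure is `r ^ (n - 1) dr dφ`. Since `Kᶜ` is open, `l` is strictly increasing with
derivative `1` on the part of the ray outside `K`, so substituting `s = l(r)` on each ray turns
`s ^ (n - 1) ds` into `(l(r) / r) ^ (n - 1) * r ^ (n - 1) dr`, which is the ghost density.
-/

open Set Module Metric

section IntegralIndicator

variable {U : Set ℝ}

lemma intervalIntegrable_indicator_one_s5 (hU : MeasurableSet U) (a b : ℝ) :
    IntervalIntegrable (U.indicator fun _ ↦ (1 : ℝ)) volume a b := by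
  rw [intervalIntegrable_iff]
  exact (intervalIntegrable_iff.1 intervalIntegrable_const).indicator hU

lemma integral_indicator_one_pos (hU : IsOpen U) {a b : ℝ} (hab : a < b) (hb : b ∈ U) :
    0 < ∫ t in a..b, U.indicator (fun _ ↦ (1 : ℝ)) t := by
  have hne : (U ∩ Ioo a b).Nonempty :=
    mem_closure_iff.1 (by simp [closure_Ioo hab.ne, hab.le]) U hU hb
  have hpos : 0 < volume (U ∩ Ioc a b) :=
    ((hU.inter isOpen_Ioo).measure_pos volume hne).trans_le
      (measure_mono (inter_subset_inter_right U Ioo_subset_Ioc_self))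
  have hfin : volume (U ∩ Ioc a b) < ⊤ :=
    (measure_mono inter_subset_right).trans_lt measure_Ioc_lt_top
  rw [intervalIntegral.integral_of_le hab.le, integral_indicator_const _ hU.measurableSet,
    measureReal_restrict_apply hU.measurableSet, smul_eq_mul, mul_one]
  exact ENNReal.toReal_pos hpos.ne' hfin.ne

lemma strictMonoOn_integral_indicator_one (hU : IsOpen U) (a : ℝ) :
    StrictMonoOn (fun r ↦ ∫ t in a..r, U.indicator (fun _ ↦ (1 : ℝ)) t) U := by
  intro r _ s hs hrs
  have hint := intervalIntegrable_indicator_one_s5 hU.measurableSet a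
  rw [← sub_pos, intervalIntegral.integral_interval_sub_left (hint s) (hint r)]
  exact integral_indicator_one_pos hU hrs hs

lemma hasDerivAt_integral_indicator_one (hU : IsOpen U) (a : ℝ) {r : ℝ} (hr : r ∈ U) :
    HasDerivAt (fun r ↦ ∫ t in a..r, U.indicator (fun _ ↦ (1 : ℝ)) t) 1 r := by
  have hcont : ContinuousAt (U.indicator fun _ ↦ (1 : ℝ)) r :=
    (continuousOn_const.congr fun t ht ↦ indicator_of_mem ht _).continuousAt (hU.mem_nhds hr)
  have hmeas : StronglyMeasurable (U.indicator fun _ ↦ (1 : ℝ)) :=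
    stronglyMeasurable_const.indicator hU.measurableSet
  simpa only [indicator_of_mem hr] using intervalIntegral.integral_hasDerivAt_right
    (intervalIntegrable_indicator_one_s5 hU.measurableSet a r) hmeas.stronglyMeasurableAtFilter hcont

end IntegralIndicator

section Radial

variable {E : Type*} [NormedAddCommGroup E] [NormedSpace ℝ E]

/-- The trace of `S` on the open ray from the origin in direction `φ`, as a set of radii. -/
def raySection (S : Set E) (φ : E) : Set ℝ := {r | 0 < r ∧ r • φ ∈ S}

/-- The map that preserves directions from the origin and sends `z` to the point at signed
distance `ρ z`. It fixes the origin whatever the value of `ρ 0`, because `‖0‖⁻¹ • 0 = 0`. -/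
noncomputable def radialMap (ρ : E → ℝ) (z : E) : E := ρ z • ‖z‖⁻¹ • z

variable {ρ : E → ℝ} {S : Set E}

lemma radialMap_zero (ρ : E → ℝ) : radialMap ρ 0 = 0 := by
  simp [radialMap]

lemma radialMap_smul (ρ : E → ℝ) {φ : E} (hφ : ‖φ‖ = 1) {r : ℝ} (hr : 0 < r) :
    radialMap ρ (r • φ) = ρ (r • φ) • φ := by
  simp [radialMap, norm_smul, hφ, abs_of_pos hr, smul_smul, hr.ne']

lemma exists_eq_smul_of_ne_zero {z : E} (hz : z ≠ 0) :
    ∃ r : ℝ, 0 < r ∧ ∃ φ : E, ‖φ‖ = 1 ∧ z = r • φ :=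
  ⟨‖z‖, norm_pos_iff.2 hz, ‖z‖⁻¹ • z, by simp [norm_smul, hz], by simp [smul_smul, hz]⟩

lemma smul_eq_smul_iff_of_norm_eq_one {φ ψ : E} (hφ : ‖φ‖ = 1) (hψ : ‖ψ‖ = 1) {r s : ℝ}
    (hr : 0 < r) (hs : 0 < s) : r • φ = s • ψ ↔ r = s ∧ φ = ψ := by
  refine ⟨fun h ↦ ?_, by rintro ⟨rfl, rfl⟩; rfl⟩
  obtain rfl : r = s := by
    simpa [norm_smul, hφ, hψ, abs_of_pos hr, abs_of_pos hs] using congrArg norm h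
  exact ⟨rfl, smul_right_injective E hr.ne' h⟩

lemma radialMap_eq_zero_iff (hpos : ∀ z ∈ S, z ≠ 0 → 0 < ρ z) {z : E} (hz : z ∈ S) :
    radialMap ρ z = 0 ↔ z = 0 := by
  refine ⟨fun h ↦ by_contra fun hz0 ↦ ?_, by rintro rfl; exact radialMap_zero ρ⟩
  simp [radialMap, hz0, (hpos z hz hz0).ne'] at h

lemma injOn_radialMap (hpos : ∀ z ∈ S, z ≠ 0 → 0 < ρ z)
    (hinj : ∀ φ, ‖φ‖ = 1 → InjOn (fun r : ℝ ↦ ρ (r • φ)) (raySection S φ)) :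
    InjOn (radialMap ρ) S := by
  intro z hz w hw h
  obtain rfl | hw0 := eq_or_ne w 0
  · rwa [radialMap_zero, radialMap_eq_zero_iff hpos hz] at h
  have hz0 : z ≠ 0 := by
    rwa [Ne, ← radialMap_eq_zero_iff hpos hz, h, radialMap_eq_zero_iff hpos hw]
  have hρz := hpos z hz hz0
  have hρw := hpos w hw hw0
  obtain ⟨r, hr, φ, hφ, rfl⟩ := exists_eq_smul_of_ne_zero hz0
  obtain ⟨s, hs, ψ, hψ, rfl⟩ := exists_eq_smul_of_ne_zero hw0
  rw [radialMap_smul ρ hφ hr, radialMap_smul ρ hψ hs,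
    smul_eq_smul_iff_of_norm_eq_one hφ hψ hρz hρw] at h
  obtain ⟨hρ, rfl⟩ := h
  rw [hinj φ hφ ⟨hr, hz⟩ ⟨hs, hw⟩ hρ]

lemma raySection_image_radialMap (hpos : ∀ z ∈ S, z ≠ 0 → 0 < ρ z) {φ : E} (hφ : ‖φ‖ = 1) :
    raySection (radialMap ρ '' S) φ = (fun r : ℝ ↦ ρ (r • φ)) '' raySection S φ := by
  have hφ0 : φ ≠ 0 := norm_ne_zero_iff.1 (by simp [hφ])
  ext s
  constructor
  · rintro ⟨hs, z, hz, hzs⟩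
    have hz0 : z ≠ 0 := by
      rw [Ne, ← radialMap_eq_zero_iff hpos hz, hzs]
      exact smul_ne_zero hs.ne' hφ0
    have hρz := hpos z hz hz0
    obtain ⟨r, hr, ψ, hψ, rfl⟩ := exists_eq_smul_of_ne_zero hz0
    rw [radialMap_smul ρ hψ hr, smul_eq_smul_iff_of_norm_eq_one hψ hφ hρz hs] at hzs
    obtain ⟨rfl, rfl⟩ := hzs
    exact ⟨r, ⟨hr, hz⟩, rfl⟩
  · rintro ⟨r, ⟨hr, hrS⟩, rfl⟩
    exact ⟨hpos _ hrS (smul_ne_zero hr.ne' hφ0), r • φ, hrS, radialMap_smul ρ hφ hr⟩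

variable [MeasurableSpace E] [BorelSpace E]

lemma measurableSet_raySection (hS : MeasurableSet S) (φ : E) : MeasurableSet (raySection S φ) :=
  measurableSet_Ioi.inter (hS.preimage (by fun_prop : Measurable fun r : ℝ ↦ r • φ))

lemma measurable_radialMap (hρ : Measurable ρ) : Measurable (radialMap ρ) := by
  unfold radialMap
  fun_prop

variable [FiniteDimensional ℝ E] [Nontrivial E] (μ : Measure E) [μ.IsAddHaarMeasure]

lemma lintegral_eq_lintegral_toSphere {f : E → ENNReal} (hf : Measurable f) :
    ∫⁻ z, f z ∂μ = ∫⁻ φ : sphere (0 : E) 1, ∫⁻ r in Ioi (0 : ℝ),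
      ENNReal.ofReal (r ^ (finrank ℝ E - 1)) * f (r • (φ : E)) ∂volume ∂μ.toSphere := by
  have hg : Measurable fun p : sphere (0 : E) 1 × Ioi (0 : ℝ) ↦ f (p.2.1 • p.1.1) := by fun_prop
  calc
    ∫⁻ z, f z ∂μ = ∫⁻ z : ({0}ᶜ : Set E), f z ∂μ.comap Subtype.val := by
      rw [lintegral_subtype_comap (measurableSet_singleton 0).compl, restrict_compl_singleton]
    _ = ∫⁻ p, f (p.2.1 • p.1.1) ∂μ.toSphere.prod (.volumeIoiPow (finrank ℝ E - 1)) := by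
      rw [← μ.measurePreserving_homeomorphUnitSphereProd.lintegral_comp hg]
      refine lintegral_congr fun z ↦ congrArg f ?_
      simp [smul_smul, norm_ne_zero_iff.2 z.2]
    _ = ∫⁻ φ, ∫⁻ r, f (r.1 • φ.1) ∂.volumeIoiPow (finrank ℝ E - 1) ∂μ.toSphere :=
      lintegral_prod _ hg.aemeasurable
    _ = _ := by
      refine lintegral_congr fun φ ↦ ?_
      rw [Measure.volumeIoiPow, lintegral_withDensity_eq_lintegral_mul _ (by fun_prop)
        (by fun_prop)]
      exact lintegral_subtype_comap measurableSet_Ioi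
        fun r ↦ ENNReal.ofReal (r ^ (finrank ℝ E - 1)) * f (r • (φ : E))

lemma setLIntegral_eq_lintegral_toSphere (hS : MeasurableSet S) {f : E → ENNReal}
    (hf : Measurable f) :
    ∫⁻ z in S, f z ∂μ = ∫⁻ φ : sphere (0 : E) 1, ∫⁻ r in raySection S (φ : E),
      ENNReal.ofReal (r ^ (finrank ℝ E - 1)) * f (r • (φ : E)) ∂volume ∂μ.toSphere := by
  rw [← lintegral_indicator hS, lintegral_eq_lintegral_toSphere μ (hf.indicator hS)]
  refine lintegral_congr fun φ ↦ ?_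
  have hpre : MeasurableSet ((fun r : ℝ ↦ r • (φ : E)) ⁻¹' S) := hS.preimage (by fun_prop)
  have hsection : (fun r : ℝ ↦ r • (φ : E)) ⁻¹' S ∩ Ioi 0 = raySection S φ := inter_comm _ _
  rw [← hsection, ← setLIntegral_indicator hpre]
  refine lintegral_congr fun r ↦ ?_
  by_cases hr : r • (φ : E) ∈ S <;> simp [hr]

theorem lintegral_image_radialMap {ρ' : E → ℝ} (hS : MeasurableSet S) (hρ : Measurable ρ)
    (hρ' : Measurable ρ') (hpos : ∀ z ∈ S, z ≠ 0 → 0 < ρ z)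
    (hinj : ∀ φ, ‖φ‖ = 1 → InjOn (fun r : ℝ ↦ ρ (r • φ)) (raySection S φ))
    (hderiv : ∀ φ, ‖φ‖ = 1 → ∀ r ∈ raySection S φ,
      HasDerivWithinAt (fun t : ℝ ↦ ρ (t • φ)) (ρ' (r • φ)) (raySection S φ) r)
    {f : E → ENNReal} (hf : Measurable f) :
    ∫⁻ w in radialMap ρ '' S, f w ∂μ =
      ∫⁻ z in S, ENNReal.ofReal (|ρ' z| * (ρ z / ‖z‖) ^ (finrank ℝ E - 1)) *
        f (radialMap ρ z) ∂μ := by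
  have hT := measurable_radialMap hρ
  rw [setLIntegral_eq_lintegral_toSphere μ
      (hS.image_of_measurable_injOn hT (injOn_radialMap hpos hinj)) hf,
    setLIntegral_eq_lintegral_toSphere μ hS (by fun_prop)]
  refine lintegral_congr fun φ ↦ ?_
  have hφ : ‖(φ : E)‖ = 1 := norm_eq_of_mem_sphere φ
  have hsection := measurableSet_raySection hS (φ : E)
  rw [raySection_image_radialMap hpos hφ,
    lintegral_image_eq_lintegral_abs_deriv_mul hsection (hderiv φ hφ) (hinj φ hφ)]
  refine setLIntegral_congr_fun hsection fun r ⟨hr, _⟩ ↦ ?_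
  have hweight : |ρ' (r • (φ : E))| * ρ (r • (φ : E)) ^ (finrank ℝ E - 1) =
      r ^ (finrank ℝ E - 1) *
        (|ρ' (r • (φ : E))| * (ρ (r • (φ : E)) / ‖r • (φ : E)‖) ^ (finrank ℝ E - 1)) := by
    rw [norm_smul, hφ, mul_one, Real.norm_of_nonneg hr.le, div_pow]
    field_simp
  rw [radialMap_smul ρ hφ hr, ← mul_assoc, ← mul_assoc, ← ENNReal.ofReal_mul (abs_nonneg _),
    ← ENNReal.ofReal_mul (by positivity), hweight]

end Radial

section Ghost

variable {n : ℕ} {K : Set (EuclideanSpace ℝ (Fin n))} {x z : EuclideanSpace ℝ (Fin n)}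

/-- The length of the part of the segment from `x` to `x + z` outside `K`: the paper's `l^φ_x(r)`
for `z = rφ`, as a function of the displacement `z`. -/
noncomputable def freeLength (K : Set (EuclideanSpace ℝ (Fin n)))
    (x z : EuclideanSpace ℝ (Fin n)) : ℝ :=
  ell K x (‖z‖⁻¹ • z) ‖z‖

lemma freeLength_smul (K : Set (EuclideanSpace ℝ (Fin n))) (x : EuclideanSpace ℝ (Fin n))
    {φ : EuclideanSpace ℝ (Fin n)} (hφ : ‖φ‖ = 1) {r : ℝ} (hr : 0 < r) :
    freeLength K x (r • φ) = ell K x φ r := by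
  simp [freeLength, norm_smul, hφ, abs_of_pos hr, smul_smul, hr.ne']

lemma freeLength_eq_norm_mul_integral (K : Set (EuclideanSpace ℝ (Fin n)))
    (x z : EuclideanSpace ℝ (Fin n)) :
    freeLength K x z = ‖z‖ * ∫ t in (0 : ℝ)..1, Kᶜ.indicator (fun _ ↦ (1 : ℝ)) (x + t • z) := by
  obtain rfl | hz := eq_or_ne z 0
  · simp [freeLength, ell]
  obtain ⟨r, hr, φ, hφ, rfl⟩ := exists_eq_smul_of_ne_zero hz
  have hscale := intervalIntegral.smul_integral_comp_mul_left (a := 0) (b := 1)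
    (fun t : ℝ ↦ Kᶜ.indicator (fun _ ↦ (1 : ℝ)) (x + t • φ)) r
  rw [freeLength_smul K x hφ hr, norm_smul, hφ, mul_one, Real.norm_of_nonneg hr.le]
  simpa [ell, smul_smul, mul_comm] using hscale.symm

lemma measurable_freeLength (hK : MeasurableSet K) (x : EuclideanSpace ℝ (Fin n)) :
    Measurable (freeLength K x) := by
  have hind : Measurable fun p : EuclideanSpace ℝ (Fin n) × ℝ ↦
      Kᶜ.indicator (fun _ ↦ (1 : ℝ)) (x + p.2 • p.1) :=
    (measurable_const.indicator hK.compl).comp (by fun_prop)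
  simp_rw [funext (freeLength_eq_norm_mul_integral K x),
    intervalIntegral.integral_of_le zero_le_one]
  exact measurable_norm.mul hind.stronglyMeasurable.integral_prod_right'.measurable

lemma isOpen_ray_compl (hK : IsClosed K) (x φ : EuclideanSpace ℝ (Fin n)) :
    IsOpen {t : ℝ | x + t • φ ∈ Kᶜ} :=
  hK.isOpen_compl.preimage (by fun_prop)

lemma freeLength_pos (hK : IsClosed K) (hz : z ≠ 0) (hxz : x + z ∈ Kᶜ) :
    0 < freeLength K x z := by
  obtain ⟨r, hr, φ, hφ, rfl⟩ := exists_eq_smul_of_ne_zero hz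
  rw [freeLength_smul K x hφ hr]
  exact integral_indicator_one_pos (isOpen_ray_compl hK x φ) hr hxz

lemma strictMonoOn_ell (hK : IsClosed K) (x φ : EuclideanSpace ℝ (Fin n)) :
    StrictMonoOn (ell K x φ) {r | x + r • φ ∈ Kᶜ} :=
  strictMonoOn_integral_indicator_one (isOpen_ray_compl hK x φ) 0

lemma hasDerivAt_ell (hK : IsClosed K) {φ : EuclideanSpace ℝ (Fin n)} {r : ℝ}
    (hr : x + r • φ ∈ Kᶜ) : HasDerivAt (ell K x φ) 1 r :=
  hasDerivAt_integral_indicator_one (isOpen_ray_compl hK x φ) 0 hr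

lemma Tmap_add (K : Set (EuclideanSpace ℝ (Fin n))) (x z : EuclideanSpace ℝ (Fin n)) :
    Tmap K x (x + z) = x + radialMap (freeLength K x) z := by
  by_cases hz : z = 0 <;> simp [Tmap, radialMap, freeLength, hz]

lemma ghost_add (q : EuclideanSpace ℝ (Fin n) → ℝ) (hz : z ≠ 0) (hxz : x + z ∈ Kᶜ) :
    ghost K q x (x + z) =
      q (radialMap (freeLength K x) z) * (freeLength K x z / ‖z‖) ^ (n - 1) := by
  have hxz' : x + z ∉ K := hxz
  simp [ghost, radialMap, freeLength, hz, hxz']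

lemma ghost_eq_zero (q : EuclideanSpace ℝ (Fin n) → ℝ) {y : EuclideanSpace ℝ (Fin n)}
    (hyx : y ≠ x) (hy : y ∈ K) : ghost K q x y = 0 := by
  simp [ghost, hyx, hy]

lemma Tmap_image (K : Set (EuclideanSpace ℝ (Fin n))) (x : EuclideanSpace ℝ (Fin n))
    (B : Set (EuclideanSpace ℝ (Fin n))) :
    Tmap K x '' B = (x + ·) '' (radialMap (freeLength K x) '' ((x + ·) ⁻¹' B)) := by
  simp_rw [image_image, ← Tmap_add, ← image_image (Tmap K x) (x + ·),
    image_preimage_eq B (AddGroup.addLeft_bijective x).surjective]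

lemma lintegral_image_radialMap_freeLength [NeZero n] (hK : IsClosed K)
    {S : Set (EuclideanSpace ℝ (Fin n))} (hS : MeasurableSet S) (hSK : ∀ z ∈ S, x + z ∈ Kᶜ)
    {f : EuclideanSpace ℝ (Fin n) → ENNReal} (hf : Measurable f) :
    ∫⁻ w in radialMap (freeLength K x) '' S, f w =
      ∫⁻ z in S, ENNReal.ofReal ((freeLength K x z / ‖z‖) ^ (n - 1)) *
        f (radialMap (freeLength K x) z) := by
  have hray : ∀ φ, ‖φ‖ = 1 →
      EqOn (fun r : ℝ ↦ freeLength K x (r • φ)) (ell K x φ) (raySection S φ) :=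
    fun φ hφ r hr ↦ freeLength_smul K x hφ hr.1
  have hinj : ∀ φ, ‖φ‖ = 1 → InjOn (fun r : ℝ ↦ freeLength K x (r • φ)) (raySection S φ) :=
    fun φ hφ ↦ ((strictMonoOn_ell hK x φ).injOn.mono fun r hr ↦ hSK _ hr.2).congr (hray φ hφ).symm
  have hderiv : ∀ φ, ‖φ‖ = 1 → ∀ r ∈ raySection S φ,
      HasDerivWithinAt (fun t : ℝ ↦ freeLength K x (t • φ)) 1 (raySection S φ) r :=
    fun φ hφ r hr ↦ (hasDerivAt_ell hK (hSK _ hr.2)).hasDerivWithinAt.congr_of_mem (hray φ hφ) hr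
  simpa using lintegral_image_radialMap volume hS (measurable_freeLength hK.measurableSet x)
    (measurable_const (a := (1 : ℝ))) (fun z hz hz0 ↦ freeLength_pos hK hz0 (hSK z hz))
    hinj hderiv hf

lemma setLIntegral_ghost_inter_compl [NeZero n] (hK : MeasurableSet K)
    (x : EuclideanSpace ℝ (Fin n)) (q : EuclideanSpace ℝ (Fin n) → ℝ)
    (A : Set (EuclideanSpace ℝ (Fin n))) :
    ∫⁻ y in A ∩ Kᶜ, ENNReal.ofReal (ghost K q x y) =
      ∫⁻ y in A, ENNReal.ofReal (ghost K q x y) := by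
  rw [inter_comm, ← setLIntegral_indicator hK.compl]
  refine lintegral_congr_ae (ae_restrict_of_ae ?_)
  filter_upwards [Measure.ae_ne volume x] with y hyx
  by_cases hy : y ∈ K
  · simp [hy, ghost_eq_zero q hyx hy]
  · simp [hy]

lemma ghost_kernel_eq_of_neZero [NeZero n] (hK : IsClosed K) (x : EuclideanSpace ℝ (Fin n))
    {q : EuclideanSpace ℝ (Fin n) → ℝ} (hq0 : ∀ z, 0 ≤ q z) (hqm : Measurable q)
    {A : Set (EuclideanSpace ℝ (Fin n))} (hA : MeasurableSet A) :
    ∫⁻ y in A, ENNReal.ofReal (ghost K q x y) =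
      ∫⁻ y in Tmap K x '' (A ∩ Kᶜ), ENNReal.ofReal (q (y - x)) := by
  set S := (x + ·) ⁻¹' (A ∩ Kᶜ)
  have hS : MeasurableSet S := (measurable_const_add x) (hA.inter hK.measurableSet.compl)
  have htranslate := measurePreserving_add_left volume x
  have hemb := measurableEmbedding_addLeft x
  calc
    ∫⁻ y in A, ENNReal.ofReal (ghost K q x y)
        = ∫⁻ y in A ∩ Kᶜ, ENNReal.ofReal (ghost K q x y) :=
      (setLIntegral_ghost_inter_compl hK.measurableSet x q A).symm
    _ = ∫⁻ z in S, ENNReal.ofReal (ghost K q x (x + z)) :=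
      (htranslate.setLIntegral_comp_preimage_emb hemb _ _).symm
    _ = ∫⁻ z in S, ENNReal.ofReal ((freeLength K x z / ‖z‖) ^ (n - 1)) *
          ENNReal.ofReal (q (radialMap (freeLength K x) z)) := by
      refine setLIntegral_congr_fun_ae hS ?_
      filter_upwards [Measure.ae_ne volume 0] with z hz hzS
      rw [ghost_add q hz hzS.2, ENNReal.ofReal_mul (hq0 _), mul_comm]
    _ = ∫⁻ w in radialMap (freeLength K x) '' S, ENNReal.ofReal (q w) :=
      (lintegral_image_radialMap_freeLength hK hS (fun z hz ↦ hz.2) hqm.ennreal_ofReal).symm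
    _ = ∫⁻ y in Tmap K x '' (A ∩ Kᶜ), ENNReal.ofReal (q (y - x)) := by
      rw [Tmap_image, ← htranslate.setLIntegral_comp_emb hemb]
      simp only [add_sub_cancel_left, S]

lemma ghost_kernel_eq_of_dim_zero {K : Set (EuclideanSpace ℝ (Fin 0))}
    {x : EuclideanSpace ℝ (Fin 0)} (hx : x ∈ Kᶜ) (q : EuclideanSpace ℝ (Fin 0) → ℝ)
    (A : Set (EuclideanSpace ℝ (Fin 0))) :
    ∫⁻ y in A, ENNReal.ofReal (ghost K q x y) =
      ∫⁻ y in Tmap K x '' (A ∩ Kᶜ), ENNReal.ofReal (q (y - x)) := by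
  have hT : Tmap K x = id := Subsingleton.elim _ _
  have hK : Kᶜ = univ := Subsingleton.eq_univ_of_nonempty ⟨x, hx⟩
  rw [hT, hK, inter_univ, image_id]
  refine lintegral_congr fun y ↦ ?_
  rw [Subsingleton.elim y x]
  simp [ghost]

end Ghost

theorem ghost_kernel_eq_general {n : ℕ} {K : Set (EuclideanSpace ℝ (Fin n))} (hK : IsClosed K)
    {x : EuclideanSpace ℝ (Fin n)} (hx : n ≠ 0 ∨ x ∈ Kᶜ)
    {q : EuclideanSpace ℝ (Fin n) → ℝ} (hq0 : ∀ z, 0 ≤ q z) (hqm : Measurable q)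
    {A : Set (EuclideanSpace ℝ (Fin n))} (hA : MeasurableSet A) :
    ∫⁻ y in A, ENNReal.ofReal (ghost K q x y) =
      ∫⁻ y in Tmap K x '' (A ∩ Kᶜ), ENNReal.ofReal (q (y - x)) := by
  obtain rfl | hn := eq_or_ne n 0
  · exact ghost_kernel_eq_of_dim_zero (hx.resolve_left (not_not_intro rfl)) q A
  · have : NeZero n := ⟨hn⟩
    exact ghost_kernel_eq_of_neZero hK x hq0 hqm hA

theorem ghost_kernel_eq {n : ℕ} (K : Set (EuclideanSpace ℝ (Fin n))) (hK : IsClosed K)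
    (x : EuclideanSpace ℝ (Fin n)) (hx : x ∈ Kᶜ)
    (q : EuclideanSpace ℝ (Fin n) → ℝ) (hq0 : ∀ z, 0 ≤ q z) (hqm : Measurable q)
    (A : Set (EuclideanSpace ℝ (Fin n))) (hA : MeasurableSet A) :
    ∫⁻ y in A, ENNReal.ofReal (ghost K q x y) ∂volume
      = ∫⁻ y in Tmap K x '' (A ∩ Kᶜ), ENNReal.ofReal (q (y - x)) ∂volume :=
  ghost_kernel_eq_general hK (.inr hx) hq0 hqm hA
end

section
/- Let K ⊆ ℝⁿ be a closed set and let q : ℝⁿ → (0, ∞) be a measurable, strictly positive function. Then the ghost density is strictly positive on Kᶜ × Kᶜ: for all x, y ∈ Kᶜ, q_K(x, y) > 0. -/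
open MeasureTheory

open Set
open scoped Topology

theorem measure_pos_of_mem_nhdsGT {α : Type*} [TopologicalSpace α] [LinearOrder α]
    [OrderTopology α] [DenselyOrdered α] [NoMaxOrder α] [MeasurableSpace α]
    (μ : Measure α) [μ.IsOpenPosMeasure] {s : Set α} {a : α} (hs : s ∈ 𝓝[>] a) :
    0 < μ s := by
  obtain ⟨u, hau, hus⟩ := mem_nhdsGT_iff_exists_Ioo_subset.1 hs
  exact ((Measure.measure_Ioo_pos μ).2 hau).trans_le (measure_mono hus)

section Ghost

variable {n : ℕ} {K : Set (EuclideanSpace ℝ (Fin n))} {x y φ : EuclideanSpace ℝ (Fin n)} {r : ℝ}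

theorem ell_eq_volume_real (hK : MeasurableSet K) (hr : 0 ≤ r) :
    ell K x φ r = volume.real ((fun t : ℝ => x + t • φ) ⁻¹' Kᶜ ∩ Ioc 0 r) := by
  have hline : Measurable fun t : ℝ => x + t • φ := by fun_prop
  calc ell K x φ r
      = ∫ t in Ioc 0 r, ((fun t : ℝ => x + t • φ) ⁻¹' Kᶜ).indicator 1 t :=
        intervalIntegral.integral_of_le hr
    _ = volume.real ((fun t : ℝ => x + t • φ) ⁻¹' Kᶜ ∩ Ioc 0 r) := by
        rw [integral_indicator_one (hline hK.compl),
          measureReal_restrict_apply (hline hK.compl)]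

theorem ell_pos (hK : MeasurableSet K) (hx : x ∉ closure K) (hr : 0 < r) :
    0 < ell K x φ r := by
  have hline : ContinuousAt (fun t : ℝ => x + t • φ) 0 := by fun_prop
  have hKc : Kᶜ ∈ 𝓝 (x + (0 : ℝ) • φ) := by
    rwa [zero_smul, add_zero, ← mem_interior_iff_mem_nhds, interior_compl]
  have hnhds : (fun t : ℝ => x + t • φ) ⁻¹' Kᶜ ∩ Ioc 0 r ∈ 𝓝[>] (0 : ℝ) :=
    Filter.inter_mem (nhdsWithin_le_nhds (hline hKc)) (Ioc_mem_nhdsGT hr)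
  rw [ell_eq_volume_real hK hr.le]
  exact ENNReal.toReal_pos (measure_pos_of_mem_nhdsGT volume hnhds).ne'
    (measure_ne_top_of_subset inter_subset_right measure_Ioc_lt_top.ne)

theorem ghost_pos_general (hK : MeasurableSet K) {q : EuclideanSpace ℝ (Fin n) → ℝ}
    (hq : ∀ z, 0 < q z) (hx : x ∉ closure K) (hy : y ∉ K) :
    0 < ghost K q x y := by
  unfold ghost
  split_ifs with hyx
  · exact hq 0
  · have hr : 0 < ‖y - x‖ := norm_sub_pos_iff.2 hyx
    rw [indicator_of_mem (mem_compl hy), mul_one]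
    exact mul_pos (hq _) (pow_pos (div_pos (ell_pos hK hx hr) hr) _)

end Ghost

theorem ghost_pos {n : ℕ} (K : Set (EuclideanSpace ℝ (Fin n))) (hK : IsClosed K)
    (q : EuclideanSpace ℝ (Fin n) → ℝ) (hqm : Measurable q)
    (hqpos : ∀ z, 0 < q z)
    (x y : EuclideanSpace ℝ (Fin n)) (hx : x ∈ Kᶜ) (hy : y ∈ Kᶜ) :
    0 < ghost K q x y :=
  ghost_pos_general hK.measurableSet hqpos (hK.closure_eq.symm ▸ hx) hy
end

section
/- Let n, m ∈ ℕ, let C ∈ ℝ^{n×m} be a matrix each of whose columns sums to zero (an incidence matrix of a graph), let M > 0, D > 0, let f₁, …, fₙ > 0 be rating parameters, and let u ∈ ℝⁿ. Suppose ω : [0, ∞) → ℝⁿ and p : [0, ∞) → ℝ^m are differentiable and satisfy, for all j = 1, …, n and all t ≥ 0, fⱼ·M·ω̇ⱼ(t) = −fⱼ·D·ωⱼ(t) + uⱼ − (C p(t))ⱼ, with initial condition ω(0) = 0. Then the system frequency ω̄(t) := (Σⱼ fⱼ M ωⱼ(t))/(Σⱼ fⱼ M) satisfies ω̄(t) = g(t)·Σᵢ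 uᵢ for all t ≥ 0, where g(t) = (D·Σⱼ fⱼ)^{−1}·(1 − e^{−(D/M)t}). -/
open Matrix

/-!
The net line flows of a lossless network cancel in the sum of the swing equations over all nodes,
and proportionality of inertia and damping turns what remains into a closed scalar equation
`ω̄' = -(D / M) * (ω̄ - a)` with equilibrium `a = (∑ uᵢ) / (D * ∑ fⱼ)`. Its solution decays
exponentially to `a`.
-/

section Relaxation

variable {E : Type*} [NormedAddCommGroup E] [NormedSpace ℝ E]

theorem sub_eq_exp_smul_sub_of_hasDerivWithinAt_Ici {y : ℝ → E} {k t₀ : ℝ} {a : E}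
    (hy : ∀ s, t₀ ≤ s → HasDerivWithinAt y (-k • (y s - a)) (Set.Ici t₀) s)
    {t : ℝ} (ht : t₀ ≤ t) :
    y t - a = Real.exp (-k * (t - t₀)) • (y t₀ - a) := by
  let z : ℝ → E := fun s => Real.exp (k * (s - t₀)) • (y s - a)
  have hz : ∀ s, t₀ ≤ s → HasDerivWithinAt z 0 (Set.Ici t₀) s := fun s hs => by
    have hexp : HasDerivWithinAt (fun r => Real.exp (k * (r - t₀)))
        (Real.exp (k * (s - t₀)) * k) (Set.Ici t₀) s := by
      simpa only [mul_one, id_eq] using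
        ((((hasDerivAt_id s).sub_const t₀).const_mul k).exp).hasDerivWithinAt
    refine (hexp.fun_smul ((hy s hs).sub_const a)).congr_deriv ?_
    module
  have hconst : z t = z t₀ :=
    constant_of_has_deriv_right_zero
      (fun s hs => ((hz s hs.1).continuousWithinAt).mono Set.Icc_subset_Ici_self)
      (fun s hs => (hz s hs.1).mono (Set.Ici_subset_Ici.2 hs.1)) t ⟨ht, le_rfl⟩
  calc y t - a = Real.exp (-k * (t - t₀)) • z t := by
        simp only [z, smul_smul, ← Real.exp_add, neg_mul, neg_add_cancel, Real.exp_zero, one_smul]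
    _ = Real.exp (-k * (t - t₀)) • (y t₀ - a) := by
        simp only [hconst, z, sub_self, mul_zero, Real.exp_zero, one_smul]

end Relaxation

theorem sum_mulVec_eq_zero {ι κ R : Type*} [Fintype ι] [Fintype κ] [NonUnitalNonAssocSemiring R]
    {C : Matrix ι κ R} (hC : ∀ e, ∑ j, C j e = 0) (x : κ → R) :
    ∑ j, (C *ᵥ x) j = 0 := by
  simp only [mulVec, dotProduct]
  rw [Finset.sum_comm]
  simp only [← Finset.sum_mul, hC, zero_mul, Finset.sum_const_zero]

section SystemFrequency

variable {ι : Type*} [Fintype ι]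

/-- The center-of-inertia frequency `ω̄` of a network: the mean of the nodal frequencies `ω`
weighted by the nodal inertias. It is `0` when the total inertia vanishes. -/
noncomputable def systemFrequency (inertia ω : ι → ℝ) : ℝ :=
  (∑ j, inertia j * ω j) / ∑ j, inertia j

theorem hasDerivWithinAt_systemFrequency (inertia : ι → ℝ) {ω : ℝ → ι → ℝ} {ω' : ι → ℝ}
    {s : Set ℝ} {t : ℝ} (hω : ∀ j, HasDerivWithinAt (fun r => ω r j) (ω' j) s t) :
    HasDerivWithinAt (fun r => systemFrequency inertia (ω r)) (systemFrequency inertia ω') s t :=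
  (HasDerivWithinAt.fun_sum fun j _ => (hω j).const_mul (inertia j)).div_const _

theorem systemFrequency_eq_of_swing {inertia ω ω' u flow : ι → ℝ} {k : ℝ}
    (hflow : ∑ j, flow j = 0)
    (hswing : ∀ j, inertia j * ω' j = -(k * (inertia j * ω j)) + u j - flow j) :
    systemFrequency inertia ω' =
      -k * systemFrequency inertia ω + (∑ j, u j) / ∑ j, inertia j := by
  have hsum : ∑ j, inertia j * ω' j = -k * (∑ j, inertia j * ω j) + ∑ j, u j := by
    simp only [hswing, Finset.sum_sub_distrib, Finset.sum_add_distrib, Finset.sum_neg_distrib,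
      ← Finset.mul_sum, hflow, sub_zero, neg_mul]
  rw [systemFrequency, systemFrequency, hsum, add_div, mul_div_assoc]

theorem system_frequency_closed_form_general {M D : ℝ} (hM : M ≠ 0) (hD : D ≠ 0)
    {f : ι → ℝ} (hf : ∑ j, f j ≠ 0) {u : ι → ℝ} {ω ω' flow : ℝ → ι → ℝ}
    (hω : ∀ j t, 0 ≤ t → HasDerivWithinAt (fun s => ω s j) (ω' t j) (Set.Ici 0) t)
    (hflow : ∀ t, 0 ≤ t → ∑ j, flow t j = 0)
    (hdyn : ∀ j t, 0 ≤ t → f j * M * ω' t j = -(f j * D * ω t j) + u j - flow t j)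
    (hinit : ∑ j, f j * M * ω 0 j = 0) {t : ℝ} (ht : 0 ≤ t) :
    systemFrequency (fun j => f j * M) (ω t) =
      (D * ∑ j, f j)⁻¹ * (1 - Real.exp (-(D / M) * t)) * ∑ j, u j := by
  let freq : ℝ → ℝ := fun s => systemFrequency (fun j => f j * M) (ω s)
  let a : ℝ := (D * ∑ j, f j)⁻¹ * ∑ j, u j
  have hode : ∀ s, 0 ≤ s → HasDerivWithinAt freq (-(D / M) • (freq s - a)) (Set.Ici 0) s := by
    intro s hs
    have hswing : ∀ j, f j * M * ω' s j
        = -(D / M * (f j * M * ω s j)) + u j - flow s j := fun j => by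
      rw [hdyn j s hs]
      field_simp
    refine (hasDerivWithinAt_systemFrequency _ fun j => hω j s hs).congr_deriv ?_
    rw [systemFrequency_eq_of_swing (hflow s hs) hswing]
    simp only [freq, a, ← Finset.sum_mul, smul_eq_mul]
    field_simp
    ring
  have hstart : freq 0 = 0 := by simp only [freq, systemFrequency, hinit, zero_div]
  have hsol := sub_eq_exp_smul_sub_of_hasDerivWithinAt_Ici hode ht
  simp only [hstart, sub_zero, zero_sub, smul_eq_mul] at hsol
  linear_combination hsol

end SystemFrequency

/-- Closed-form expression for the system (center-of-inertia) frequency after a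
step disturbance `u` under the linearized swing dynamics with proportional
inertia and damping `Mⱼ = fⱼM`, `Dⱼ = fⱼD`. -/
theorem system_frequency_closed_form (n m : ℕ)
    (C : Matrix (Fin n) (Fin m) ℝ) (hC : ∀ e : Fin m, ∑ j, C j e = 0)
    (M D : ℝ) (hM : 0 < M) (hD : 0 < D)
    (f : Fin n → ℝ) (hf : ∀ j, 0 < f j)
    (u : Fin n → ℝ)
    (ω : ℝ → Fin n → ℝ) (p : ℝ → Fin m → ℝ)
    (hω : ∀ j, Differentiable ℝ (fun t => ω t j))
    (hp : ∀ e, Differentiable ℝ (fun t => p t e))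
    (hdyn : ∀ j : Fin n, ∀ t : ℝ, 0 ≤ t →
      f j * M * deriv (fun s => ω s j) t
        = -(f j * D * ω t j) + u j - C.mulVec (p t) j)
    (hinit : ω 0 = 0) :
    ∀ t : ℝ, 0 ≤ t →
      (∑ j, f j * M * ω t j) / (∑ j, f j * M)
        = (D * ∑ j, f j)⁻¹ * (1 - Real.exp (-(D / M) * t)) * ∑ i, u i := by
  intro t ht
  obtain _ | _ := isEmpty_or_nonempty (Fin n)
  · simp
  · exact system_frequency_closed_form_general hM.ne' hD.ne'
      (Finset.sum_pos (fun j _ => hf j) Finset.univ_nonempty).ne'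
      (fun j s _ => (hω j s).hasDerivAt.hasDerivWithinAt)
      (fun s _ => sum_mulVec_eq_zero hC (p s)) hdyn (by simp [hinit]) ht
end
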